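/- Let μ1, μ2 be Borel probability measures on the closed unit disc D = {z ∈ ℂ : |z| ≤ 1}. Then Σ((μ1+μ2)/2) ≥ (Σ(μ1)+Σ(μ2))/2, with equality if and only if μ1 = μ2; consequently the functional μ ↦ Σ(μ) is strictly concave on the convex set of probability measures on D with Σ(μ) > -∞. -/

import Mathlib

open MeasureTheory Filter Topology
open scoped ENNReal NNReal

noncomputable section

/-- The closed unit disc in `ℂ`. -/
def 𝔻 : Set ℂ := {z : ℂ | ‖z‖ ≤ 1}

/-- `log 2 - log ‖z - w‖ ∈ [0, ∞]`, with the correct value `∞` on the diagonal. -/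
def negLogDist (z w : ℂ) : ℝ≥0∞ :=
  if z = w then ⊤ else ENNReal.ofReal (Real.log 2 - Real.log ‖z - w‖)

/-- The negative logarithmic energy `Σ(μ) = ∬ log |z-w| dμ(z) dμ(w) ∈ [-∞, ∞)` of a
measure of total mass one on the closed unit disc.  Since `log |z-w| ≤ log 2` there,
`Σ(μ) = log 2 - ∬ (log 2 - log |z-w|) dμ dμ`, where the (nonnegative) inner integrand is
given the correct value `∞` on the diagonal. -/
def sigmaE (μ : Measure 𝔻) : EReal :=
  ((Real.log 2 : ℝ) : EReal) -
    ((∫⁻ p : 𝔻 × 𝔻, negLogDist p.1.val p.2.val ∂(μ.prod μ) : ℝ≥0∞) : EReal)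


lemma aux_exp (a t : ℝ) (ha : a ≤ 4) (ht : 0 < t) :
    ENNReal.ofReal ((Real.exp (-(t * a)) - Real.exp (-(t * 4))) / t) =
      ∫⁻ s in Set.Ioc a 4, ENNReal.ofReal (Real.exp (-(t * s))) := by
  have hc : Continuous fun s : ℝ => Real.exp (-(t * s)) := by fun_prop
  rw [← ofReal_integral_eq_lintegral_ofReal ((hc.integrableOn_Icc).mono_set Set.Ioc_subset_Icc_self)
    (ae_of_all _ fun s => (Real.exp_pos _).le), ← intervalIntegral.integral_of_le ha]
  congr 1
  have := intervalIntegral.integral_eq_sub_of_hasDerivAt (a := a) (b := 4)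
    (f := fun s => - Real.exp (-(t * s)) / t) (f' := fun s => Real.exp (-(t * s)))
    (fun s _ => by
      have h1 : HasDerivAt (fun s : ℝ => -(t * s)) (-t) s := by
        convert! ((hasDerivAt_id s).const_mul t).neg using 1
        simp
      have := (h1.exp.neg).div_const t
      convert! this using 1
      field_simp) (hc.intervalIntegrable _ _)
  rw [this]; ring

lemma aux_inv (s : ℝ) (hs : 0 < s) :
    ∫⁻ t in Set.Ioi (0:ℝ), ENNReal.ofReal (Real.exp (-(t * s))) = ENNReal.ofReal s⁻¹ := by
  have h := integral_exp_mul_Ioi (a := -s) (by linarith) 0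
  have hi := integrableOn_exp_mul_Ioi (a := -s) (by linarith) 0
  have e : ∀ t : ℝ, Real.exp (-(t * s)) = Real.exp (-s * t) := by
    intro t; congr 1; ring
  simp only [e]
  rw [← ofReal_integral_eq_lintegral_ofReal hi (ae_of_all _ fun s => (Real.exp_pos _).le), h]
  congr 1
  simp

lemma aux_kernel (z w : ℂ) (hz : ‖z‖ ≤ 1) (hw : ‖w‖ ≤ 1) :
    2 * negLogDist z w = ∫⁻ t in Set.Ioi (0:ℝ),
      ENNReal.ofReal ((Real.exp (-(t * ‖z - w‖ ^ 2)) - Real.exp (-(t * 4))) / t) := by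
  have hd : ‖z - w‖ ≤ 2 := (norm_sub_le z w).trans (by linarith)
  have ha : ‖z - w‖ ^ 2 ≤ 4 := by nlinarith [norm_nonneg (z - w)]
  have ha0 : 0 ≤ ‖z - w‖ ^ 2 := by positivity
  rw [setLIntegral_congr_fun measurableSet_Ioi (fun t ht => aux_exp _ t ha ht),
    lintegral_lintegral_swap (by fun_prop),
    setLIntegral_congr_fun measurableSet_Ioc
      (fun s hs => aux_inv s (lt_of_le_of_lt ha0 hs.1))]
  unfold negLogDist
  split_ifs with h
  · subst h
    simp only [sub_self, norm_zero, ne_eq, OfNat.ofNat_ne_zero, not_false_eq_true, zero_pow]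
    rw [ENNReal.mul_top (by norm_num)]
    by_contra hne
    have h1 : IntegrableOn (fun s : ℝ => s⁻¹) (Set.Ioc 0 4) := by
      refine ⟨by fun_prop, ?_⟩
      rw [hasFiniteIntegral_iff_ofReal]
      · exact lt_top_iff_ne_top.2 (Ne.symm hne)
      · filter_upwards [ae_restrict_mem measurableSet_Ioc] with s hs
        exact (inv_pos.2 hs.1).le
    have h2 := (intervalIntegrable_iff_integrableOn_Ioc_of_le (by norm_num : (0:ℝ) ≤ 4)).2 h1
    rw [intervalIntegrable_inv_iff] at h2
    norm_num at h2
  · have hp : 0 < ‖z - w‖ := norm_pos_iff.2 (sub_ne_zero.2 h)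
    have hp2 : 0 < ‖z - w‖ ^ 2 := by positivity
    rw [← ofReal_integral_eq_lintegral_ofReal, ← intervalIntegral.integral_of_le ha,
      integral_inv_of_pos hp2 (by norm_num), Real.log_div (by norm_num) hp2.ne', Real.log_pow,
      show (4:ℝ) = 2 ^ 2 by norm_num, Real.log_pow, ← ENNReal.ofReal_ofNat 2,
      ← ENNReal.ofReal_mul (by norm_num)]
    · congr 1; push_cast; ring
    · have : ContinuousOn (fun s : ℝ => s⁻¹) (Set.Icc (‖z - w‖ ^ 2) 4) :=
        continuousOn_inv₀.mono fun s hs => (lt_of_lt_of_le hp2 hs.1).ne'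
      exact this.integrableOn_Icc.mono_set Set.Ioc_subset_Icc_self
    · filter_upwards [ae_restrict_mem measurableSet_Ioc] with s hs
      exact (inv_pos.2 (hp2.trans hs.1)).le

lemma aux_integrable_gauss (M N : Measure ℂ) [IsProbabilityMeasure M] [IsProbabilityMeasure N]
    (b : ℝ) (hb : 0 < b) :
    Integrable (fun q : ℂ × (ℂ × ℂ) =>
      Complex.exp (-b * ‖q.1‖ ^ 2 + Complex.I * (inner ℝ (q.2.1 - q.2.2) q.1 : ℝ)))
      (volume.prod (M.prod N)) := by
  have h0 : Integrable (fun v : ℂ => Real.exp (-b * ‖v‖ ^ 2)) := by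
    have := (GaussianFourier.integrable_cexp_neg_mul_sq_norm_add (V := ℂ) (b := (b:ℂ))
      (by simpa using hb) 0 0).norm
    refine this.congr (ae_of_all _ fun v => ?_)
    simp only [Complex.norm_exp]
    congr 1
    simp [← Complex.ofReal_pow]
  have h1 := h0.mul_prod (integrable_const (μ := M.prod N) (1:ℝ))
  refine h1.mono' (by fun_prop) (ae_of_all _ fun q => ?_)
  rw [Complex.norm_exp]
  simp [← Complex.ofReal_pow]

lemma aux_charFun_mul (M N : Measure ℂ) [IsProbabilityMeasure M] [IsProbabilityMeasure N]
    (b : ℝ) (v : ℂ) :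
    ∫ p, Complex.exp (-b * ‖v‖ ^ 2 + Complex.I * (inner ℝ (p.1 - p.2) v : ℝ)) ∂(M.prod N) =
      Real.exp (-b * ‖v‖ ^ 2) * (charFun M v * (starRingEnd ℂ) (charFun N v)) := by
  rw [← charFun_neg, charFun_apply, charFun_apply, ← integral_prod_mul, ← integral_const_mul]
  congr 1
  ext p
  rw [← Complex.exp_add]
  push_cast
  rw [← Complex.exp_add, inner_sub_left, inner_neg_right]
  congr 1
  push_cast
  ring

def gaussE (M N : Measure ℂ) (t : ℝ) : ℝ := ∫ p, Real.exp (-(t * ‖p.1 - p.2‖ ^ 2)) ∂(M.prod N)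

lemma aux_gauss (M N : Measure ℂ) [IsProbabilityMeasure M] [IsProbabilityMeasure N]
    (b : ℝ) (hb : 0 < b) :
    Integrable (fun v : ℂ => Real.exp (-b * ‖v‖ ^ 2) *
      (charFun M v * (starRingEnd ℂ) (charFun N v)).re) ∧
    ∫ v : ℂ, Real.exp (-b * ‖v‖ ^ 2) * (charFun M v * (starRingEnd ℂ) (charFun N v)).re =
      (Real.pi / b) * gaussE M N (1 / (4 * b)) := by
  have hi := aux_integrable_gauss M N b hb
  have h1 := hi.integral_prod_left
  simp only [aux_charFun_mul] at h1
  have h2 := integral_integral_swap (f := fun (v : ℂ) (p : ℂ × ℂ) =>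
    Complex.exp (-b * ‖v‖ ^ 2 + Complex.I * (inner ℝ (p.1 - p.2) v : ℝ))) hi
  simp only [aux_charFun_mul] at h2
  have h3 : ∀ p : ℂ × ℂ, ∫ v : ℂ,
      Complex.exp (-b * ‖v‖ ^ 2 + Complex.I * (inner ℝ (p.1 - p.2) v : ℝ)) =
      ((Real.pi / b * Real.exp (-((1 / (4 * b)) * ‖p.1 - p.2‖ ^ 2)) : ℝ) : ℂ) := by
    intro p
    rw [GaussianFourier.integral_cexp_neg_mul_sq_norm_add (by simpa using hb)]
    simp only [Complex.finrank_real_complex, Complex.I_sq]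
    push_cast
    rw [show (2 / 2 : ℂ) = 1 by norm_num, Complex.cpow_one]
    congr 2
    have : (b:ℂ) ≠ 0 := by exact_mod_cast hb.ne'
    field_simp
  simp only [h3] at h2
  rw [integral_complex_ofReal, integral_const_mul] at h2
  have h4 := congrArg Complex.re h2
  have h5 := integral_re h1
  simp only [RCLike.re_eq_complex_re, Complex.re_ofReal_mul] at h5
  have h6 := h1.re
  simp only [RCLike.re_eq_complex_re, Complex.re_ofReal_mul] at h6
  refine ⟨h6, ?_⟩
  rw [h5, h4]
  simp [gaussE]

lemma aux_cont_charFun (M : Measure ℂ) [IsProbabilityMeasure M] : Continuous (charFun M) := by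
  unfold charFun
  refine continuous_of_dominated (bound := fun _ => 1) (fun v => by fun_prop) ?_
    (integrable_const _) (ae_of_all _ fun x => by fun_prop)
  intro v
  refine ae_of_all _ fun x => ?_
  rw [Complex.norm_exp_ofReal_mul_I]

lemma aux_pos (M N : Measure ℂ) [IsProbabilityMeasure M] [IsProbabilityMeasure N]
    (t : ℝ) (ht : 0 < t) :
    2 * gaussE M N t ≤ gaussE M M t + gaussE N N t ∧
    (2 * gaussE M N t = gaussE M M t + gaussE N N t → M = N) := by
  set b := 1 / (4 * t) with hbdef
  have hb : 0 < b := by positivity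
  have ht' : t = 1 / (4 * b) := by rw [hbdef]; field_simp
  obtain ⟨i1, e1⟩ := aux_gauss M M b hb
  obtain ⟨i2, e2⟩ := aux_gauss N N b hb
  obtain ⟨i3, e3⟩ := aux_gauss M N b hb
  rw [← ht'] at e1 e2 e3
  have hf : ∀ v : ℂ, Real.exp (-b * ‖v‖ ^ 2) * ‖charFun M v - charFun N v‖ ^ 2 =
      (Real.exp (-b * ‖v‖ ^ 2) * (charFun M v * (starRingEnd ℂ) (charFun M v)).re +
      Real.exp (-b * ‖v‖ ^ 2) * (charFun N v * (starRingEnd ℂ) (charFun N v)).re) -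
      2 * (Real.exp (-b * ‖v‖ ^ 2) * (charFun M v * (starRingEnd ℂ) (charFun N v)).re) := by
    intro v
    rw [← Complex.normSq_eq_norm_sq (_ - _), Complex.normSq_sub, Complex.mul_conj, Complex.mul_conj,
      Complex.ofReal_re, Complex.ofReal_re]
    ring
  have hI : Integrable (fun v : ℂ => Real.exp (-b * ‖v‖ ^ 2) *
      ‖charFun M v - charFun N v‖ ^ 2) := by
    simp only [hf]
    exact (i1.add i2).sub (i3.const_mul 2)
  have hE : ∫ v : ℂ, Real.exp (-b * ‖v‖ ^ 2) * ‖charFun M v - charFun N v‖ ^ 2 =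
      (Real.pi / b) * (gaussE M M t + gaussE N N t - 2 * gaussE M N t) := by
    simp only [hf]
    have hs := integral_sub (i1.add i2) (i3.const_mul 2)
    simp only [Pi.add_apply] at hs
    rw [hs, integral_add i1 i2, integral_const_mul,
      e1, e2, e3]
    ring
  have hc : 0 < Real.pi / b := by positivity
  have hnn : 0 ≤ fun v : ℂ => Real.exp (-b * ‖v‖ ^ 2) * ‖charFun M v - charFun N v‖ ^ 2 :=
    fun v => by positivity
  have h0 := integral_nonneg (μ := volume) hnn
  constructor
  · rw [hE] at h0
    have := nonneg_of_mul_nonneg_right h0 hc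
    linarith
  · intro heq
    rw [heq, sub_self, mul_zero, integral_eq_zero_iff_of_nonneg hnn hI] at hE
    have hcM := aux_cont_charFun M
    have hcN := aux_cont_charFun N
    have := (Continuous.ae_eq_iff_eq volume (by fun_prop) (by fun_prop)).1 hE
    refine Measure.ext_of_charFun ?_
    ext v
    have hv := congrFun this v
    simp only [Pi.zero_apply, mul_eq_zero, (Real.exp_pos _).ne', false_or] at hv
    simpa [sub_eq_zero] using hv

def mutE (μ ν : Measure 𝔻) : ℝ≥0∞ := ∫⁻ p : 𝔻 × 𝔻, negLogDist p.1.val p.2.val ∂(μ.prod ν)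

lemma measurable_val : Measurable (Subtype.val : 𝔻 → ℂ) := measurable_subtype_coe

lemma gaussE_map (μ ν : Measure 𝔻) [IsProbabilityMeasure μ] [IsProbabilityMeasure ν] (t : ℝ) :
    gaussE (μ.map Subtype.val) (ν.map Subtype.val) t =
      ∫ p : 𝔻 × 𝔻, Real.exp (-(t * ‖p.1.val - p.2.val‖ ^ 2)) ∂(μ.prod ν) := by
  unfold gaussE
  rw [Measure.map_prod_map _ _ measurable_val measurable_val, integral_map
    (measurable_val.prodMap measurable_val).aemeasurable (by fun_prop)]
  rfl

lemma dist_sq_le (p : 𝔻 × 𝔻) : ‖p.1.val - p.2.val‖ ^ 2 ≤ 4 := by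
  have h1 : ‖p.1.val‖ ≤ 1 := p.1.2
  have h2 : ‖p.2.val‖ ≤ 1 := p.2.2
  have := norm_sub_le p.1.val p.2.val
  nlinarith [norm_nonneg (p.1.val - p.2.val)]

lemma integrable_gauss_disc (μ ν : Measure 𝔻) [IsProbabilityMeasure μ] [IsProbabilityMeasure ν]
    (t : ℝ) (ht : 0 < t) :
    Integrable (fun p : 𝔻 × 𝔻 => Real.exp (-(t * ‖p.1.val - p.2.val‖ ^ 2))) (μ.prod ν) := by
  refine (integrable_const (1:ℝ)).mono' (by fun_prop) (ae_of_all _ fun p => ?_)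
  rw [Real.norm_eq_abs, abs_of_pos (Real.exp_pos _), Real.exp_le_one_iff]
  have : 0 ≤ t * ‖p.1.val - p.2.val‖ ^ 2 := by positivity
  linarith

lemma gaussE_ge (μ ν : Measure 𝔻) [IsProbabilityMeasure μ] [IsProbabilityMeasure ν]
    (t : ℝ) (ht : 0 < t) :
    Real.exp (-(t * 4)) ≤ gaussE (μ.map Subtype.val) (ν.map Subtype.val) t := by
  rw [gaussE_map]
  have : ∫ p : 𝔻 × 𝔻, Real.exp (-(t * 4)) ∂(μ.prod ν) ≤
      ∫ p : 𝔻 × 𝔻, Real.exp (-(t * ‖p.1.val - p.2.val‖ ^ 2)) ∂(μ.prod ν) := by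
    refine integral_mono (integrable_const _) (integrable_gauss_disc μ ν t ht) fun p => ?_
    refine Real.exp_le_exp.2 ?_
    nlinarith [dist_sq_le p]
  simpa using this

lemma mutE_eq (μ ν : Measure 𝔻) [IsProbabilityMeasure μ] [IsProbabilityMeasure ν] :
    2 * mutE μ ν = ∫⁻ t in Set.Ioi (0:ℝ), ENNReal.ofReal
      ((gaussE (μ.map Subtype.val) (ν.map Subtype.val) t - Real.exp (-(t * 4))) / t) := by
  unfold mutE
  rw [← lintegral_const_mul' _ _ (by norm_num),
    lintegral_congr fun p : 𝔻 × 𝔻 => aux_kernel p.1.val p.2.val p.1.2 p.2.2,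
    lintegral_lintegral_swap (by fun_prop)]
  refine setLIntegral_congr_fun measurableSet_Ioi fun t ht => ?_
  have ht : 0 < t := ht
  have hi := integrable_gauss_disc μ ν t ht
  have hi2 : Integrable (fun p : 𝔻 × 𝔻 => (Real.exp (-(t * ‖p.1.val - p.2.val‖ ^ 2)) -
      Real.exp (-(t * 4))) / t) (μ.prod ν) := (hi.sub (integrable_const _)).div_const t
  rw [← ofReal_integral_eq_lintegral_ofReal hi2,
    integral_div, integral_sub hi (integrable_const _), gaussE_map]
  · simp
  · refine ae_of_all _ fun p => div_nonneg (sub_nonneg.2 (Real.exp_le_exp.2 ?_)) ht.le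
    nlinarith [dist_sq_le p]

lemma measurable_gaussE (μ ν : Measure 𝔻) [IsProbabilityMeasure μ] [IsProbabilityMeasure ν] :
    Measurable (gaussE (μ.map Subtype.val) (ν.map Subtype.val)) := by
  have : StronglyMeasurable fun t : ℝ =>
      ∫ p : 𝔻 × 𝔻, Real.exp (-(t * ‖p.1.val - p.2.val‖ ^ 2)) ∂(μ.prod ν) := by
    refine StronglyMeasurable.integral_prod_right
      (f := fun (t : ℝ) (p : 𝔻 × 𝔻) => Real.exp (-(t * ‖p.1.val - p.2.val‖ ^ 2))) ?_
    refine Continuous.stronglyMeasurable ?_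
    unfold Function.uncurry
    fun_prop
  convert! this.measurable using 1
  ext t
  exact gaussE_map μ ν t

lemma mutE_main (μ ν : Measure 𝔻) [IsProbabilityMeasure μ] [IsProbabilityMeasure ν] :
    2 * mutE μ ν ≤ mutE μ μ + mutE ν ν ∧
    (mutE μ μ ≠ ⊤ → mutE ν ν ≠ ⊤ → 2 * mutE μ ν = mutE μ μ + mutE ν ν → μ = ν) := by
  have iM := Measure.isProbabilityMeasure_map (μ := μ) measurable_val.aemeasurable
  have iN := Measure.isProbabilityMeasure_map (μ := ν) measurable_val.aemeasurable
  set M := μ.map Subtype.val with hM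
  set N := ν.map Subtype.val with hN
  set F : Measure ℂ → Measure ℂ → ℝ → ℝ≥0∞ := fun A B t =>
    ENNReal.ofReal ((gaussE A B t - Real.exp (-(t * 4))) / t) with hF
  have m11 := measurable_gaussE μ μ
  have m12 := measurable_gaussE μ ν
  have m22 := measurable_gaussE ν ν
  have e11 : 2 * mutE μ μ = ∫⁻ t in Set.Ioi (0:ℝ), F M M t := mutE_eq μ μ
  have e12 : 2 * mutE μ ν = ∫⁻ t in Set.Ioi (0:ℝ), F M N t := mutE_eq μ ν
  have e22 : 2 * mutE ν ν = ∫⁻ t in Set.Ioi (0:ℝ), F N N t := mutE_eq ν ν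
  have mF11 : Measurable (F M M) := by fun_prop
  have mF12 : Measurable (F M N) := by fun_prop
  have key : ∀ t : ℝ, 0 < t →
      F M M t + F N N t = ENNReal.ofReal
        ((gaussE M M t + gaussE N N t - 2 * Real.exp (-(t * 4))) / t) ∧
      2 * F M N t = ENNReal.ofReal ((2 * gaussE M N t - 2 * Real.exp (-(t * 4))) / t) := by
    intro t ht
    have g11 := gaussE_ge μ μ t ht
    have g22 := gaussE_ge ν ν t ht
    constructor
    · rw [hF]; simp only
      rw [← ENNReal.ofReal_add (div_nonneg (sub_nonneg.2 g11) ht.le)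
        (div_nonneg (sub_nonneg.2 g22) ht.le)]
      congr 1; ring
    · rw [hF]; simp only
      rw [← ENNReal.ofReal_ofNat 2, ← ENNReal.ofReal_mul (by norm_num)]
      congr 1; ring
  have hle : ∀ t ∈ Set.Ioi (0:ℝ), 2 * F M N t ≤ F M M t + F N N t := by
    intro t ht
    rw [(key t ht).1, (key t ht).2]
    have := (aux_pos M N t ht).1
    have ht : 0 < t := ht
    gcongr
  have eL : 2 * (2 * mutE μ ν) = ∫⁻ t in Set.Ioi (0:ℝ), 2 * F M N t := by
    rw [e12, lintegral_const_mul' _ _ (by norm_num)]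
  have eR : 2 * (mutE μ μ + mutE ν ν) = ∫⁻ t in Set.Ioi (0:ℝ), (F M M t + F N N t) := by
    rw [mul_add, e11, e22, lintegral_add_left mF11]
  have hmain : 2 * mutE μ ν ≤ mutE μ μ + mutE ν ν := by
    rw [← ENNReal.mul_le_mul_iff_right (a := 2) (by norm_num) (by norm_num), eL, eR]
    exact setLIntegral_mono' measurableSet_Ioi hle
  refine ⟨hmain, fun f1 f2 heq => ?_⟩
  have hfin : ∫⁻ t in Set.Ioi (0:ℝ), 2 * F M N t ≠ ⊤ := by
    rw [← eL, heq]
    exact ENNReal.mul_ne_top (by norm_num) (ENNReal.add_ne_top.2 ⟨f1, f2⟩)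
  have hae := ae_eq_of_ae_le_of_lintegral_le (μ := volume.restrict (Set.Ioi (0:ℝ)))
    (f := fun t => 2 * F M N t) (g := fun t => F M M t + F N N t)
    ((ae_restrict_iff' measurableSet_Ioi).2 (ae_of_all _ hle)) hfin (by fun_prop)
    (by rw [← eL, ← eR, heq])
  have hne : (ae (volume.restrict (Set.Ioi (0:ℝ)))).NeBot := by
    rw [ae_neBot, Ne, Measure.restrict_eq_zero]
    simp
  obtain ⟨t, h1, h2⟩ := (hae.and (ae_restrict_mem measurableSet_Ioi)).exists
  have ht : 0 < t := h2
  simp only at h1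
  rw [(key t ht).1, (key t ht).2, ENNReal.ofReal_eq_ofReal_iff] at h1
  · have h3 : 2 * gaussE M N t = gaussE M M t + gaussE N N t := by
      rw [div_left_inj' ht.ne'] at h1
      linarith
    have h4 := (aux_pos M N t ht).2 h3
    have hemb : MeasurableEmbedding (Subtype.val : 𝔻 → ℂ) :=
      MeasurableEmbedding.subtype_coe (isClosed_le continuous_norm continuous_const).measurableSet
    have := congrArg (Measure.comap (Subtype.val : 𝔻 → ℂ)) h4
    rwa [hM, hN, hemb.comap_map, hemb.comap_map] at this
  · have := gaussE_ge μ ν t ht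
    exact div_nonneg (by linarith) ht.le
  · have g1 := gaussE_ge μ μ t ht
    have g2 := gaussE_ge ν ν t ht
    exact div_nonneg (by linarith) ht.le

lemma mutE_symm (μ ν : Measure 𝔻) [IsProbabilityMeasure μ] [IsProbabilityMeasure ν] :
    mutE ν μ = mutE μ ν := by
  unfold mutE
  have hs : MeasurableEmbedding (Prod.swap : 𝔻 × 𝔻 → 𝔻 × 𝔻) :=
    (MeasurableEquiv.prodComm (α := 𝔻) (β := 𝔻)).measurableEmbedding
  rw [← Measure.prod_swap, hs.lintegral_map]
  refine lintegral_congr fun p => ?_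
  simp [negLogDist, eq_comm, norm_sub_rev]

lemma mutE_comb (μ ν : Measure 𝔻) [IsProbabilityMeasure μ] [IsProbabilityMeasure ν]
    (a b : ℝ≥0∞) : mutE (a • μ + b • ν) (a • μ + b • ν) =
      a * a * mutE μ μ + 2 * (a * b * mutE μ ν) + b * b * mutE ν ν := by
  have h : mutE (a • μ + b • ν) (a • μ + b • ν) =
      a * a * mutE μ μ + a * b * mutE μ ν + b * a * mutE ν μ + b * b * mutE ν ν := by
    unfold mutE
    simp only [Measure.prod_add, Measure.add_prod, Measure.prod_smul_left, Measure.prod_smul_right,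
      lintegral_add_measure, lintegral_smul_measure, smul_eq_mul]
    ring
  rw [h, mutE_symm μ ν]
  ring

lemma sigmaE_of_ne_top (μ : Measure 𝔻) (h : mutE μ μ ≠ ⊤) :
    sigmaE μ = ((Real.log 2 - (mutE μ μ).toReal : ℝ) : EReal) := by
  unfold sigmaE
  change _ - ((mutE μ μ : ℝ≥0∞) : EReal) = _
  lift mutE μ μ to ℝ≥0 using h with e
  rw [EReal.coe_sub]
  rfl

lemma sigmaE_eq_bot (μ : Measure 𝔻) (h : mutE μ μ = ⊤) : sigmaE μ = ⊥ := by
  unfold sigmaE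
  change _ - ((mutE μ μ : ℝ≥0∞) : EReal) = _
  rw [h]; rfl

lemma sigmaE_comb (μ ν : Measure 𝔻) [IsProbabilityMeasure μ] [IsProbabilityMeasure ν]
    (h1 : mutE μ μ ≠ ⊤) (h2 : mutE ν ν ≠ ⊤) (a b : ℝ) (ha : 0 ≤ a) (hb : 0 ≤ b) :
    sigmaE (ENNReal.ofReal a • μ + ENNReal.ofReal b • ν) =
      ((Real.log 2 - (a * a * (mutE μ μ).toReal + 2 * (a * b * (mutE μ ν).toReal) +
        b * b * (mutE ν ν).toReal) : ℝ) : EReal) := by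
  have h12 : mutE μ ν ≠ ⊤ := by
    intro h
    have := (mutE_main μ ν).1
    rw [h, ENNReal.mul_top (by norm_num), top_le_iff, ENNReal.add_eq_top] at this
    tauto
  have hc := mutE_comb μ ν (ENNReal.ofReal a) (ENNReal.ofReal b)
  have e : mutE (ENNReal.ofReal a • μ + ENNReal.ofReal b • ν)
      (ENNReal.ofReal a • μ + ENNReal.ofReal b • ν) = ENNReal.ofReal
      (a * a * (mutE μ μ).toReal + 2 * (a * b * (mutE μ ν).toReal) +
        b * b * (mutE ν ν).toReal) := by
    rw [hc, ENNReal.ofReal_add (by positivity) (by positivity),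
      ENNReal.ofReal_add (by positivity) (by positivity)]
    simp only [ENNReal.ofReal_mul, ha, hb, mul_nonneg, ENNReal.ofReal_toReal h1,
      ENNReal.ofReal_toReal h2, ENNReal.ofReal_toReal h12, zero_le_two, ENNReal.ofReal_ofNat]
  rw [sigmaE_of_ne_top _ (by rw [e]; exact ENNReal.ofReal_ne_top), e,
    ENNReal.toReal_ofReal (by positivity)]

/-- **Strict midpoint concavity of the logarithmic energy** on probability measures on
the closed unit disc: `Σ((μ₁+μ₂)/2) ≥ (Σ(μ₁)+Σ(μ₂))/2`, with equality (when the
energies are finite) if and only if `μ₁ = μ₂`; consequently `Σ` is strictly concave on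
the convex set of probability measures with `Σ(μ) > -∞`. -/
theorem logEnergy_strictly_concave (μ₁ μ₂ : ProbabilityMeasure 𝔻) :
    (sigmaE (μ₁ : Measure 𝔻) + sigmaE (μ₂ : Measure 𝔻) ≤
      2 * sigmaE ((2⁻¹ : ℝ≥0∞) • ((μ₁ : Measure 𝔻) + (μ₂ : Measure 𝔻)))) ∧
    (sigmaE (μ₁ : Measure 𝔻) ≠ ⊥ → sigmaE (μ₂ : Measure 𝔻) ≠ ⊥ →
      (sigmaE (μ₁ : Measure 𝔻) + sigmaE (μ₂ : Measure 𝔻) =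
          2 * sigmaE ((2⁻¹ : ℝ≥0∞) • ((μ₁ : Measure 𝔻) + (μ₂ : Measure 𝔻))) ↔ μ₁ = μ₂)) ∧
    (∀ t : ℝ, 0 < t → t < 1 → μ₁ ≠ μ₂ →
      sigmaE (μ₁ : Measure 𝔻) ≠ ⊥ → sigmaE (μ₂ : Measure 𝔻) ≠ ⊥ →
      ((t : ℝ) : EReal) * sigmaE (μ₁ : Measure 𝔻) +
          (((1 - t : ℝ)) : EReal) * sigmaE (μ₂ : Measure 𝔻) <
        sigmaE (ENNReal.ofReal t • (μ₁ : Measure 𝔻) +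
          ENNReal.ofReal (1 - t) • (μ₂ : Measure 𝔻))) := by
  have main := mutE_main (μ₁ : Measure 𝔻) (μ₂ : Measure 𝔻)
  have hhalf : (2⁻¹ : ℝ≥0∞) • ((μ₁ : Measure 𝔻) + (μ₂ : Measure 𝔻)) =
      ENNReal.ofReal 2⁻¹ • (μ₁ : Measure 𝔻) + ENNReal.ofReal 2⁻¹ • (μ₂ : Measure 𝔻) := by
    rw [smul_add, ENNReal.ofReal_inv_of_pos (by norm_num), ENNReal.ofReal_ofNat]
  rw [hhalf]
  by_cases h1 : mutE (μ₁ : Measure 𝔻) (μ₁ : Measure 𝔻) = ⊤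
  · have := sigmaE_eq_bot _ h1
    simp [this]
  by_cases h2 : mutE (μ₂ : Measure 𝔻) (μ₂ : Measure 𝔻) = ⊤
  · have := sigmaE_eq_bot _ h2
    simp [this]
  have h12 : mutE (μ₁ : Measure 𝔻) (μ₂ : Measure 𝔻) ≠ ⊤ := by
    intro h
    have := main.1
    rw [h, ENNReal.mul_top (by norm_num), top_le_iff, ENNReal.add_eq_top] at this
    tauto
  have hc := sigmaE_comb (μ₁ : Measure 𝔻) (μ₂ : Measure 𝔻) h1 h2
  have s1 := sigmaE_of_ne_top _ h1
  have s2 := sigmaE_of_ne_top _ h2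
  set x := (mutE (μ₁ : Measure 𝔻) (μ₁ : Measure 𝔻)).toReal with hx
  set y := (mutE (μ₂ : Measure 𝔻) (μ₂ : Measure 𝔻)).toReal with hy
  set m := (mutE (μ₁ : Measure 𝔻) (μ₂ : Measure 𝔻)).toReal with hm
  have t1 : (2 * mutE (μ₁ : Measure 𝔻) (μ₂ : Measure 𝔻)).toReal = 2 * m := by
    simp [hm]
  have t2 : (mutE (μ₁ : Measure 𝔻) (μ₁ : Measure 𝔻) +
      mutE (μ₂ : Measure 𝔻) (μ₂ : Measure 𝔻)).toReal = x + y := ENNReal.toReal_add h1 h2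
  have ft1 : 2 * mutE (μ₁ : Measure 𝔻) (μ₂ : Measure 𝔻) ≠ ⊤ := ENNReal.mul_ne_top (by norm_num) h12
  have ft2 := ENNReal.add_ne_top.2 ⟨h1, h2⟩
  have hle : 2 * m ≤ x + y := by
    rw [← t1, ← t2]
    exact (ENNReal.toReal_le_toReal ft1 ft2).2 main.1
  have heq : 2 * m = x + y → μ₁ = μ₂ := by
    intro h
    rw [← t1, ← t2, ENNReal.toReal_eq_toReal_iff' ft1 ft2] at h
    exact Subtype.ext (main.2 h1 h2 h)
  have htwo : (2 : EReal) = ((2 : ℝ) : EReal) := rfl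
  refine ⟨?_, fun _ _ => ?_, ?_⟩
  · rw [hc _ _ (by norm_num) (by norm_num), s1, s2, htwo, ← EReal.coe_add, ← EReal.coe_mul,
      EReal.coe_le_coe_iff]
    linarith
  · rw [hc _ _ (by norm_num) (by norm_num), s1, s2, htwo, ← EReal.coe_add, ← EReal.coe_mul,
      EReal.coe_eq_coe_iff]
    constructor
    · intro h
      exact heq (by linarith)
    · intro h
      have e1 : x = m := by rw [hx, hm, h]
      have e2 : y = m := by rw [hy, hm, h]
      rw [e1, e2]; ring
  · intro t ht0 ht1 hne _ _
    have hlt : 2 * m < x + y := lt_of_le_of_ne hle fun h => hne (heq h)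
    rw [hc _ _ ht0.le (by linarith), s1, s2, ← EReal.coe_mul, ← EReal.coe_mul, ← EReal.coe_add,
      EReal.coe_lt_coe_iff]
    have : 0 < t * (1 - t) * (x + y - 2 * m) :=
      mul_pos (mul_pos ht0 (by linarith)) (by linarith)
    nlinarith
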